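/- (Theorem 6.5, large-penalty case) Suppose 1 < K < exp((μ₊−μ₋)²/2) and λ > (K−1)/(K+1). Then the penalized fair objective L_λ(θ) = E_nat(θ) + λ·|∫_{−∞}^{θ} φ₊(x) dx − ∫_{θ}^{+∞} φ₋(x) dx| is minimized over [μ₋, μ₊] at the fair threshold θ_f = μ₋ + (μ₊−μ₋)/(K+1); that is, L_λ(θ_f) ≤ L_λ(θ) for all θ ∈ [μ₋, μ₊]. -/

import Mathlib

/-!
Write `A θ = ∫_{-∞}^θ φ₊`, `B θ = ∫_θ^∞ φ₋`, and let `θ_f = μ₋ + (μ₊ - μ₋)/(K + 1)`. The affine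
map `y ↦ θ_f - K (y - θ_f)` carries `φ₋` to `φ₊`, so `A θ_f = B θ_f` (`fair_balance`) and the penalty
vanishes at `θ_f`.

On `[μ₋, μ₊]` the distance `|x - μ₊|/K` decreases and `|x - μ₋|` increases, and they agree at
`θ_f`; hence
`φ₋ ≤ K φ₊` to the right of `θ_f` and `K φ₊ ≤ φ₋` to its left. Let `a`, `b` be the masses that `φ₊`,
`φ₋` give to the interval between `θ` and `θ_f`. To the left, `a ≤ b` makes even the natural error
larger at `θ`. To the right, the change of the objective is `(a - b)/2 + λ (a + b)`, which is
nonnegative since `b ≤ K a` gives `(b - a)/(b + a) ≤ (K - 1)/(K + 1) < λ`.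
-/

open Real MeasureTheory Set

/-- Density of the Gaussian N(μm, 1). -/
noncomputable def phiM (μm x : ℝ) : ℝ :=
  (1 / Real.sqrt (2 * Real.pi)) * Real.exp (-(x - μm) ^ 2 / 2)

/-- Density of the Gaussian N(μp, K²). -/
noncomputable def phiP (μp K x : ℝ) : ℝ :=
  (1 / (Real.sqrt (2 * Real.pi) * K)) * Real.exp (-(x - μp) ^ 2 / (2 * K ^ 2))

/-- Natural error of the threshold classifier at θ. -/
noncomputable def Enat (μm μp K θ : ℝ) : ℝ :=
  (1 / 2) * (∫ x in Iic θ, phiP μp K x) + (1 / 2) * (∫ x in Ioi θ, phiM μm x)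

/-- The λ-penalized fair objective. -/
noncomputable def fairObj (μm μp K lam θ : ℝ) : ℝ :=
  Enat μm μp K θ +
    lam * |(∫ x in Iic θ, phiP μp K x) - (∫ x in Ioi θ, phiM μm x)|

lemma phiM_nonneg (μm x : ℝ) : 0 ≤ phiM μm x := by
  unfold phiM; positivity

lemma phiP_nonneg (μp x : ℝ) {K : ℝ} (hK : 0 < K) : 0 ≤ phiP μp K x := by
  unfold phiP; positivity

lemma integrable_phiM (μm : ℝ) : Integrable (phiM μm) := by
  have h := ((integrable_exp_neg_mul_sq (b := 1 / 2) (by norm_num)).comp_sub_right μm).const_mul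
    (1 / √(2 * π))
  refine h.congr (.of_forall fun x => ?_)
  simp only [phiM]
  congr 2
  ring

lemma integrable_phiP (μp : ℝ) {K : ℝ} (hK : 0 < K) : Integrable (phiP μp K) := by
  have h := ((integrable_exp_neg_mul_sq (b := 1 / (2 * K ^ 2)) (by positivity)).comp_sub_right
    μp).const_mul (1 / (√(2 * π) * K))
  refine h.congr (.of_forall fun x => ?_)
  simp only [phiP]
  congr 2
  ring

lemma mul_phiP (μp x : ℝ) {K : ℝ} (hK : 0 < K) :
    K * phiP μp K x = 1 / √(2 * π) * exp (-((μp - x) / K) ^ 2 / 2) := by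
  have hpi : 0 < √(2 * π) := by positivity
  have e : -(x - μp) ^ 2 / (2 * K ^ 2) = -((μp - x) / K) ^ 2 / 2 := by
    field_simp; ring
  rw [phiP, e]
  field_simp

/-- The two class-conditional errors coincide at the fair threshold, here given by
`μ₊ - t = K (t - μ₋)`. -/
lemma fair_balance {μm μp K t : ℝ} (hK : 0 < K) (ht : μp - t = K * (t - μm)) :
    ∫ x in Iic t, phiP μp K x = ∫ x in Ioi t, phiM μm x := by
  -- The substitution is `y = -x / K + c`, which fixes `t`.
  set c := t + K⁻¹ * t with hc
  have h1 : ∀ x, phiP μp K x = K⁻¹ * phiM μm (K⁻¹ * (-x) + c) := by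
    intro x
    have h : (μp - x) / K = K⁻¹ * (-x) + c - μm := by
      rw [hc]; field_simp; linarith
    have := mul_phiP μp x hK
    rw [h] at this
    rw [phiM, ← this]
    field_simp
  have h2 : ∫ x in Ioi (K⁻¹ * (-t)), phiM μm (x + c) = ∫ x in Ioi t, phiM μm x := by
    rw [← (measurePreserving_add_right volume c).setIntegral_preimage_emb
      (measurableEmbedding_addRight c) (phiM μm) (Ioi t)]
    congr 2
    ext x
    simp only [mem_Ioi, mem_preimage, hc]
    constructor <;> intro h <;> linarith
  simp_rw [h1]
  rw [integral_const_mul, integral_comp_neg_Iic t (fun x => phiM μm (K⁻¹ * x + c)),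
    integral_comp_mul_left_Ioi (fun x => phiM μm (x + c)) (-t) (inv_pos.2 hK), h2]
  simp [hK.ne']

theorem penalized_fair_minimizer_large_lambda (μm μp K lam : ℝ) (hμ : μm < μp)
    (hK1 : 1 < K) (hK2 : K < Real.exp ((μp - μm) ^ 2 / 2))
    (hlam : (K - 1) / (K + 1) < lam) :
    ∀ θ ∈ Icc μm μp,
      fairObj μm μp K lam (μm + (μp - μm) / (K + 1)) ≤ fairObj μm μp K lam θ := by
  rintro θ ⟨hθ1, hθ2⟩
  have hK : 0 < K := by linarith
  have hlam0 : 0 < lam := lt_of_le_of_lt (div_nonneg (by linarith) (by linarith)) hlam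
  rw [div_lt_iff₀ (by linarith)] at hlam
  set t := μm + (μp - μm) / (K + 1) with ht
  have htK : μp - t = K * (t - μm) := by rw [ht]; field_simp; ring
  have htm : μm < t := by rw [ht]; linarith [div_pos (sub_pos.2 hμ) (by linarith : 0 < K + 1)]
  have htp : t < μp := by nlinarith
  have hdiv : (μp - t) / K = t - μm := by rw [htK]; field_simp
  have hbal := fair_balance hK htK
  have iP := integrable_phiP μp hK
  have iM := integrable_phiM μm
  have hpi : (0 : ℝ) ≤ 1 / √(2 * π) := by positivity
  have right : ∀ x ∈ Ioc t μp, phiM μm x ≤ K * phiP μp K x := by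
    rintro x ⟨h1, h2⟩
    rw [mul_phiP μp x hK, phiM]
    have h3 : (μp - x) / K ≤ (μp - t) / K := by gcongr
    have h4 : 0 ≤ (μp - x) / K := div_nonneg (by linarith) hK.le
    gcongr
    linarith
  have left : ∀ x ∈ Ioc μm t, K * phiP μp K x ≤ phiM μm x := by
    rintro x ⟨h1, h2⟩
    rw [mul_phiP μp x hK, phiM]
    have h3 : (μp - t) / K ≤ (μp - x) / K := by gcongr
    gcongr
    linarith
  have splitP : ∀ u v, u ≤ v → ∫ x in Iic v, phiP μp K x =
      (∫ x in Iic u, phiP μp K x) + ∫ x in Ioc u v, phiP μp K x := by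
    intro u v h
    rw [← setIntegral_union (by rw [disjoint_left]; intro x h1 h2; exact absurd h2.1 (not_lt.2 h1))
      measurableSet_Ioc iP.integrableOn iP.integrableOn, Iic_union_Ioc_eq_Iic h]
  have splitM : ∀ u v, u ≤ v → ∫ x in Ioi u, phiM μm x =
      (∫ x in Ioc u v, phiM μm x) + ∫ x in Ioi v, phiM μm x := by
    intro u v h
    rw [← setIntegral_union (by rw [disjoint_left]; intro x h1 h2; exact absurd h2 (not_lt.2 h1.2))
      measurableSet_Ioi iM.integrableOn iM.integrableOn, Ioc_union_Ioi_eq_Ioi h]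
  have posP : ∀ u v, 0 ≤ ∫ x in Ioc u v, phiP μp K x := fun u v =>
    setIntegral_nonneg measurableSet_Ioc fun x _ => phiP_nonneg μp x hK
  simp only [fairObj, Enat]
  rw [hbal, sub_self, abs_zero, mul_zero, add_zero]
  rcases le_total t θ with h | h
  · have e1 := splitP t θ h
    have e2 := splitM t θ h
    have hab : ∫ x in Ioc t θ, phiM μm x ≤ K * ∫ x in Ioc t θ, phiP μp K x := by
      rw [← integral_const_mul]
      exact setIntegral_mono_on iM.integrableOn (iP.const_mul K).integrableOn measurableSet_Ioc
        fun x hx => right x ⟨hx.1, hx.2.trans hθ2⟩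
    have ha := posP t θ
    have hb : 0 ≤ ∫ x in Ioc t θ, phiM μm x :=
      setIntegral_nonneg measurableSet_Ioc fun x _ => phiM_nonneg μm x
    rw [hbal] at e1
    rw [e1]
    set a := ∫ x in Ioc t θ, phiP μp K x
    set b := ∫ x in Ioc t θ, phiM μm x
    set B := ∫ x in Ioi θ, phiM μm x
    rw [e2]
    have habs : lam * (a + b) ≤ lam * |b + B + a - B| :=
      mul_le_mul_of_nonneg_left (by linarith [le_abs_self (b + B + a - B)]) hlam0.le
    -- Both sides of `(b - a) / 2 ≤ lam * (a + b)` are compared after scaling by `K + 1`.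
    have key : (K + 1) * ((b - a) / 2) ≤ (K + 1) * (lam * (a + b)) := by
      have h1 : (K - 1) * (a + b) ≤ lam * (K + 1) * (a + b) :=
        mul_le_mul_of_nonneg_right hlam.le (by linarith)
      have h2 : 0 ≤ (K - 1) * (a + b) := mul_nonneg (by linarith) (by linarith)
      nlinarith
    have := le_of_mul_le_mul_left key (by linarith)
    linarith
  · have e1 := splitP θ t h
    have e2 := splitM θ t h
    have hab : K * ∫ x in Ioc θ t, phiP μp K x ≤ ∫ x in Ioc θ t, phiM μm x := by
      rw [← integral_const_mul]
      exact setIntegral_mono_on (iP.const_mul K).integrableOn iM.integrableOn measurableSet_Ioc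
        fun x hx => left x ⟨hθ1.trans_lt hx.1, hx.2⟩
    have ha := posP θ t
    have hab' : ∫ x in Ioc θ t, phiP μp K x ≤ ∫ x in Ioc θ t, phiM μm x := by nlinarith
    have := mul_nonneg hlam0.le
      (abs_nonneg ((∫ x in Iic θ, phiP μp K x) - ∫ x in Ioi θ, phiM μm x))
    linarith
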